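/- arXiv:1507.02700 — 2 statements merged into one kernel-verified Lean document; each statement's English description precedes it below -/
import Mathlib

section
/- The group homomorphism from the Artin braid group Br^n to the n-strand Z/2-braid group Br_2^n determined by σ_i ↦ σ_{i,0} for i = 1, …, n−1 is injective; that is, if two classical braids without odd crossings are equal as Z/2-braids, then they are equal as classical braids. -/
/-!
STATEMENT 1: The homomorphism `Brⁿ → Br₂ⁿ`, σ_i ↦ σ_{i,0}, is injective:
classical braids without odd crossings that are equal as ℤ/2-braids are equal
as classical braids.  (One may use as a known fact that the canonical
homomorphism `Brⁿ → Br_vⁿ`, σ_i ↦ σ_i, is injective; this is supplied as a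
hypothesis.)
-/

/-!
The injectivity follows from a homomorphism `Br₂ⁿ → Br_vⁿ` through which the canonical map
`Brⁿ → Br_vⁿ` factors: send `σ_{i,0}` to the classical generator `σ_i` and `σ_{i,1}` to the virtual
generator `ζ_i`. A triple with `ε + η + ξ = 0` in `ZMod 2` is either zero or has exactly two ones.
In the first case the ℤ/2-braid relation becomes the classical braid relation. In the other three it
becomes a form of the mixed relation `σ_i ζ_j ζ_i = ζ_j ζ_i σ_j`, rearranged by means of
`ζ_i² = ζ_j² = 1` (`mixed_forms`). The relation `ζ_i ζ_j ζ_i = ζ_j ζ_i ζ_j` is not needed, since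
`(1, 1, 1)` has odd sum.
-/

namespace MarkedBraids

/-- Defining relators of the Artin braid group `Brⁿ`. -/
def artinBraidRels (n : ℕ) : Set (FreeGroup (Fin (n - 1))) :=
  {w | ∃ i j : Fin (n - 1), ((i : ℕ) + 2 ≤ (j : ℕ) ∨ (j : ℕ) + 2 ≤ (i : ℕ)) ∧
      w = FreeGroup.of i * FreeGroup.of j * (FreeGroup.of j * FreeGroup.of i)⁻¹} ∪
  {w | ∃ i j : Fin (n - 1), (j : ℕ) = (i : ℕ) + 1 ∧
      w = FreeGroup.of i * FreeGroup.of j * FreeGroup.of i *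
          (FreeGroup.of j * FreeGroup.of i * FreeGroup.of j)⁻¹}

/-- The Artin braid group `Brⁿ` on `n` strands. -/
abbrev ArtinBraidGroup (n : ℕ) := PresentedGroup (artinBraidRels n)

/-- The generator σ_i of `Brⁿ`. -/
def σₐ {n : ℕ} (i : Fin (n - 1)) : ArtinBraidGroup n :=
  PresentedGroup.of i

/-- Defining relators of the `n`-strand ℤ/2-braid group `Br₂ⁿ`. -/
def z2BraidRels (n : ℕ) : Set (FreeGroup (Fin (n - 1) × ZMod 2)) :=
  {w | ∃ (i j : Fin (n - 1)) (ε η : ZMod 2),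
      ((i : ℕ) + 2 ≤ (j : ℕ) ∨ (j : ℕ) + 2 ≤ (i : ℕ)) ∧
      w = FreeGroup.of (i, ε) * FreeGroup.of (j, η) *
          (FreeGroup.of (j, η) * FreeGroup.of (i, ε))⁻¹} ∪
  {w | ∃ (i j : Fin (n - 1)) (ε η ξ : ZMod 2),
      (j : ℕ) = (i : ℕ) + 1 ∧ ε + η + ξ = 0 ∧
      w = FreeGroup.of (i, ε) * FreeGroup.of (j, η) * FreeGroup.of (i, ξ) *
          (FreeGroup.of (j, ξ) * FreeGroup.of (i, η) * FreeGroup.of (j, ε))⁻¹}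

/-- The `n`-strand ℤ/2-braid group `Br₂ⁿ`. -/
abbrev Z2BraidGroup (n : ℕ) := PresentedGroup (z2BraidRels n)

/-- The generator σ_{i,ε} of `Br₂ⁿ`. -/
def σ₂ {n : ℕ} (i : Fin (n - 1)) (ε : ZMod 2) : Z2BraidGroup n :=
  PresentedGroup.of (i, ε)

/-- Classical generator (as a word) of the virtual braid group. -/
def σw {n : ℕ} (i : Fin (n - 1)) : FreeGroup (Fin (n - 1) ⊕ Fin (n - 1)) :=
  FreeGroup.of (Sum.inl i)

/-- Virtual generator (as a word) of the virtual braid group. -/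
def ζw {n : ℕ} (i : Fin (n - 1)) : FreeGroup (Fin (n - 1) ⊕ Fin (n - 1)) :=
  FreeGroup.of (Sum.inr i)

/-- Defining relators of the `n`-strand virtual braid group `Br_vⁿ`. -/
def virtualBraidRels (n : ℕ) : Set (FreeGroup (Fin (n - 1) ⊕ Fin (n - 1))) :=
  {w | ∃ i j : Fin (n - 1), ((i : ℕ) + 2 ≤ (j : ℕ) ∨ (j : ℕ) + 2 ≤ (i : ℕ)) ∧
      w = σw i * σw j * (σw j * σw i)⁻¹} ∪
  {w | ∃ i j : Fin (n - 1), (j : ℕ) = (i : ℕ) + 1 ∧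
      w = σw i * σw j * σw i * (σw j * σw i * σw j)⁻¹} ∪
  {w | ∃ i j : Fin (n - 1), ((i : ℕ) + 2 ≤ (j : ℕ) ∨ (j : ℕ) + 2 ≤ (i : ℕ)) ∧
      w = ζw i * ζw j * (ζw j * ζw i)⁻¹} ∪
  {w | ∃ i j : Fin (n - 1), (j : ℕ) = (i : ℕ) + 1 ∧
      w = ζw i * ζw j * ζw i * (ζw j * ζw i * ζw j)⁻¹} ∪
  {w | ∃ i : Fin (n - 1), w = ζw i * ζw i} ∪
  {w | ∃ i j : Fin (n - 1), (j : ℕ) = (i : ℕ) + 1 ∧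
      w = σw i * ζw j * ζw i * (ζw j * ζw i * σw j)⁻¹} ∪
  {w | ∃ i j : Fin (n - 1), ((i : ℕ) + 2 ≤ (j : ℕ) ∨ (j : ℕ) + 2 ≤ (i : ℕ)) ∧
      w = σw i * ζw j * (ζw j * σw i)⁻¹}

/-- The `n`-strand virtual braid group `Br_vⁿ`. -/
abbrev VirtualBraidGroup (n : ℕ) := PresentedGroup (virtualBraidRels n)

/-- The classical generator σ_i of `Br_vⁿ`. -/
def σᵥ {n : ℕ} (i : Fin (n - 1)) : VirtualBraidGroup n :=
  PresentedGroup.of (Sum.inl i)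

/-- The virtual generator ζ_i of `Br_vⁿ`. -/
def ζᵥ {n : ℕ} (i : Fin (n - 1)) : VirtualBraidGroup n :=
  PresentedGroup.of (Sum.inr i)

section VirtualRelations

variable {n : ℕ} {i j : Fin (n - 1)}

lemma σᵥ_comm (h : (i : ℕ) + 2 ≤ (j : ℕ) ∨ (j : ℕ) + 2 ≤ (i : ℕ)) :
    (σᵥ i : VirtualBraidGroup n) * σᵥ j = σᵥ j * σᵥ i :=
  PresentedGroup.mk_eq_mk_of_mul_inv_mem (rels := virtualBraidRels n)
    (x := σw i * σw j) (y := σw j * σw i)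
    (.inl <| .inl <| .inl <| .inl <| .inl <| .inl ⟨i, j, h, rfl⟩)

lemma σᵥ_braid (h : (j : ℕ) = (i : ℕ) + 1) :
    (σᵥ i : VirtualBraidGroup n) * σᵥ j * σᵥ i = σᵥ j * σᵥ i * σᵥ j :=
  PresentedGroup.mk_eq_mk_of_mul_inv_mem (rels := virtualBraidRels n)
    (x := σw i * σw j * σw i) (y := σw j * σw i * σw j)
    (.inl <| .inl <| .inl <| .inl <| .inl <| .inr ⟨i, j, h, rfl⟩)

lemma ζᵥ_comm (h : (i : ℕ) + 2 ≤ (j : ℕ) ∨ (j : ℕ) + 2 ≤ (i : ℕ)) :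
    (ζᵥ i : VirtualBraidGroup n) * ζᵥ j = ζᵥ j * ζᵥ i :=
  PresentedGroup.mk_eq_mk_of_mul_inv_mem (rels := virtualBraidRels n)
    (x := ζw i * ζw j) (y := ζw j * ζw i)
    (.inl <| .inl <| .inl <| .inl <| .inr ⟨i, j, h, rfl⟩)

lemma ζᵥ_mul_self (i : Fin (n - 1)) : (ζᵥ i : VirtualBraidGroup n) * ζᵥ i = 1 :=
  PresentedGroup.one_of_mem (rels := virtualBraidRels n) (x := ζw i * ζw i)
    (.inl <| .inl <| .inr ⟨i, rfl⟩)

lemma σᵥ_ζᵥ_ζᵥ (h : (j : ℕ) = (i : ℕ) + 1) :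
    (σᵥ i : VirtualBraidGroup n) * ζᵥ j * ζᵥ i = ζᵥ j * ζᵥ i * σᵥ j :=
  PresentedGroup.mk_eq_mk_of_mul_inv_mem (rels := virtualBraidRels n)
    (x := σw i * ζw j * ζw i) (y := ζw j * ζw i * σw j)
    (.inl <| .inr ⟨i, j, h, rfl⟩)

lemma σᵥ_ζᵥ_comm (h : (i : ℕ) + 2 ≤ (j : ℕ) ∨ (j : ℕ) + 2 ≤ (i : ℕ)) :
    (σᵥ i : VirtualBraidGroup n) * ζᵥ j = ζᵥ j * σᵥ i :=
  PresentedGroup.mk_eq_mk_of_mul_inv_mem (rels := virtualBraidRels n)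
    (x := σw i * ζw j) (y := ζw j * σw i)
    (.inr ⟨i, j, h, rfl⟩)

end VirtualRelations

/-- When `a` and `b` are their own inverses, the mixed relation `s b a = b a t` may be rewritten with
the letters `s`, `t` in the middle or at the opposite ends. -/
lemma mixed_forms {G : Type*} [Group G] {a b s t : G} (ha : a * a = 1) (hb : b * b = 1)
    (h : s * b * a = b * a * t) : a * t * a = b * s * b ∧ a * b * s = t * a * b := by
  have ha' : a⁻¹ = a := inv_eq_of_mul_eq_one_left ha
  have hb' : b⁻¹ = b := inv_eq_of_mul_eq_one_left hb
  have hs : s = b * a * t * a⁻¹ * b⁻¹ := by rw [← h]; group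
  rw [ha', hb'] at hs
  subst hs
  constructor
  · calc a * t * a = (b * b) * a * t * a * (b * b) := by rw [hb]; group
      _ = _ := by group
  · calc a * b * (b * a * t * a * b) = a * (b * b) * a * t * a * b := by group
      _ = (a * a) * t * a * b := by rw [hb]; group
      _ = _ := by rw [ha]; group

/-- The images in `Br_vⁿ` of the generators of `Br₂ⁿ`: even crossings remain classical, and odd
crossings become virtual. -/
def oddToVirtual {n : ℕ} (p : Fin (n - 1) × ZMod 2) : VirtualBraidGroup n :=
  if p.2 = 0 then σᵥ p.1 else ζᵥ p.1

@[simp] lemma oddToVirtual_zero {n : ℕ} (i : Fin (n - 1)) : oddToVirtual (i, 0) = σᵥ i := rfl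

@[simp] lemma oddToVirtual_one {n : ℕ} (i : Fin (n - 1)) : oddToVirtual (i, 1) = ζᵥ i := rfl

lemma zmod_two_cases (ε : ZMod 2) : ε = 0 ∨ ε = 1 := by
  revert ε; decide

lemma oddToVirtual_rels {n : ℕ} :
    ∀ r ∈ z2BraidRels n, FreeGroup.lift (oddToVirtual (n := n)) r = 1 := by
  rintro r (⟨i, j, ε, η, h, rfl⟩ | ⟨i, j, ε, η, ξ, h, hsum, rfl⟩)
  · simp only [map_mul, map_inv, FreeGroup.lift_apply_of, mul_inv_eq_one]
    rcases zmod_two_cases ε with rfl | rfl <;> rcases zmod_two_cases η with rfl | rfl <;>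
      simp only [oddToVirtual_zero, oddToVirtual_one]
    · exact σᵥ_comm h
    · exact σᵥ_ζᵥ_comm h
    · exact (σᵥ_ζᵥ_comm h.symm).symm
    · exact ζᵥ_comm h
  · simp only [map_mul, map_inv, FreeGroup.lift_apply_of, mul_inv_eq_one]
    have hmix := mixed_forms (ζᵥ_mul_self i) (ζᵥ_mul_self j) (σᵥ_ζᵥ_ζᵥ h)
    rcases zmod_two_cases ε with rfl | rfl <;> rcases zmod_two_cases η with rfl | rfl <;>
      rcases zmod_two_cases ξ with rfl | rfl <;>
      first
      | exact absurd hsum (by decide)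
      | simp only [oddToVirtual_zero, oddToVirtual_one]
    · exact σᵥ_braid h
    · exact σᵥ_ζᵥ_ζᵥ h
    · exact hmix.1
    · exact hmix.2

/-- The homomorphism `Brⁿ → Br₂ⁿ` determined by σ_i ↦ σ_{i,0} is injective,
given the known fact that the canonical homomorphism `Brⁿ → Br_vⁿ`
(σ_i ↦ σ_i) is injective. -/
theorem injective_artin_to_z2Braid (n : ℕ)
    (known : ∀ g : ArtinBraidGroup n →* VirtualBraidGroup n,
      (∀ i : Fin (n - 1), g (σₐ i) = σᵥ i) → Function.Injective g)
    (f : ArtinBraidGroup n →* Z2BraidGroup n)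
    (hf : ∀ i : Fin (n - 1), f (σₐ i) = σ₂ i 0) :
    Function.Injective f := by
  have hinj := known ((PresentedGroup.toGroup oddToVirtual_rels).comp f) fun i => by
    rw [MonoidHom.comp_apply, hf, σ₂, PresentedGroup.toGroup.of, oddToVirtual_zero]
  rw [MonoidHom.coe_comp] at hinj
  exact hinj.of_comp

end MarkedBraids
end

section
/- In the n-strand dotted braid group Br_d^n, for every 1 ≤ i ≤ n−2 the identity (γ_i σ_i γ_{i+1})(γ_{i+1} σ_{i+1} γ_{i+2}) σ_i = σ_{i+1} (γ_i σ_i γ_{i+1})(γ_{i+1} σ_{i+1} γ_{i+2}) holds (the image under the dotted-braid embedding of the third Reidemeister relation σ_{i,1} σ_{i+1,1} σ_{i,0} = σ_{i+1,0} σ_{i,1} σ_{i+1,1}). -/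
/-!
Write `a, b, c` for the dots on strands `i, i+1, i+2` and `s, t` for the crossings `σ_i, σ_{i+1}`.
The two middle dots cancel by `b² = 1`, so the claim becomes `a s t c s = t a s t c`. The dot `c`
misses the crossing `s` and the dot `a` misses the crossing `t`, so the outer dots slide to the
ends, leaving `a (s t s) c = a (t s t) c`, which is the braid relation.
-/

/-!
STATEMENT 7: In Br_dⁿ, for consecutive i, j = i+1 one has
(γ_i σ_i γ_{i+1})(γ_{i+1} σ_{i+1} γ_{i+2}) σ_i = σ_{i+1} (γ_i σ_i γ_{i+1})(γ_{i+1} σ_{i+1} γ_{i+2}),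
the image under the dotted-braid embedding of the third Reidemeister relation
σ_{i,1} σ_{i+1,1} σ_{i,0} = σ_{i+1,0} σ_{i,1} σ_{i+1,1}.
-/

namespace MarkedBraids

/-- The left strand `i` of the crossing σ_i, as an index in `Fin n`. -/
def strandL {n : ℕ} (i : Fin (n - 1)) : Fin n :=
  ⟨(i : ℕ), by have := i.isLt; omega⟩

/-- The right strand `i+1` of the crossing σ_i, as an index in `Fin n`. -/
def strandR {n : ℕ} (i : Fin (n - 1)) : Fin n :=
  ⟨(i : ℕ) + 1, by have := i.isLt; omega⟩

/-- The crossing generator σ_i, as a word. -/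
def σdw {n : ℕ} (i : Fin (n - 1)) : FreeGroup (Fin (n - 1) ⊕ Fin n) :=
  FreeGroup.of (Sum.inl i)

/-- The dot generator γ_k, as a word. -/
def γw {n : ℕ} (k : Fin n) : FreeGroup (Fin (n - 1) ⊕ Fin n) :=
  FreeGroup.of (Sum.inr k)

/-- Defining relators of the `n`-strand dotted braid group `Br_dⁿ`. -/
def dottedBraidRels (n : ℕ) : Set (FreeGroup (Fin (n - 1) ⊕ Fin n)) :=
  -- far commutativity of crossings
  {w | ∃ i j : Fin (n - 1), ((i : ℕ) + 2 ≤ (j : ℕ) ∨ (j : ℕ) + 2 ≤ (i : ℕ)) ∧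
      w = σdw i * σdw j * (σdw j * σdw i)⁻¹} ∪
  -- braid relation
  {w | ∃ i j : Fin (n - 1), (j : ℕ) = (i : ℕ) + 1 ∧
      w = σdw i * σdw j * σdw i * (σdw j * σdw i * σdw j)⁻¹} ∪
  -- dots are involutions: γ_k² = e
  {w | ∃ k : Fin n, w = γw k * γw k} ∪
  -- dots commute with each other
  {w | ∃ k l : Fin n, w = γw k * γw l * (γw l * γw k)⁻¹} ∪
  -- four dots around a crossing cancel: γ_i γ_{i+1} σ_i γ_i γ_{i+1} = σ_i
  {w | ∃ i : Fin (n - 1),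
      w = γw (strandL i) * γw (strandR i) * σdw i * γw (strandL i) * γw (strandR i) *
          (σdw i)⁻¹} ∪
  -- a dot on a strand not involved in a crossing commutes with that crossing
  {w | ∃ (i : Fin (n - 1)) (k : Fin n), k ≠ strandL i ∧ k ≠ strandR i ∧
      w = γw k * σdw i * (σdw i * γw k)⁻¹}

/-- The `n`-strand dotted braid group `Br_dⁿ`. -/
abbrev DottedBraidGroup (n : ℕ) := PresentedGroup (dottedBraidRels n)

/-- The crossing generator σ_i of `Br_dⁿ`. -/
def σd {n : ℕ} (i : Fin (n - 1)) : DottedBraidGroup n :=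
  PresentedGroup.of (Sum.inl i)

/-- The dot generator γ_k of `Br_dⁿ`. -/
def γd {n : ℕ} (k : Fin n) : DottedBraidGroup n :=
  PresentedGroup.of (Sum.inr k)

theorem σd_braid {n : ℕ} (i j : Fin (n - 1)) (hij : (j : ℕ) = (i : ℕ) + 1) :
    (σd i * σd j * σd i : DottedBraidGroup n) = σd j * σd i * σd j :=
  mul_inv_eq_one.mp <| PresentedGroup.one_of_mem (rels := dottedBraidRels n) <|
    Or.inl <| Or.inl <| Or.inl <| Or.inl <| Or.inr ⟨i, j, hij, rfl⟩

theorem γd_mul_self {n : ℕ} (k : Fin n) : (γd k * γd k : DottedBraidGroup n) = 1 :=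
  PresentedGroup.one_of_mem (rels := dottedBraidRels n) <|
    Or.inl <| Or.inl <| Or.inl <| Or.inr ⟨k, rfl⟩

theorem γd_mul_σd_comm {n : ℕ} (i : Fin (n - 1)) (k : Fin n) (hL : k ≠ strandL i)
    (hR : k ≠ strandR i) : (γd k * σd i : DottedBraidGroup n) = σd i * γd k :=
  mul_inv_eq_one.mp <| PresentedGroup.one_of_mem (rels := dottedBraidRels n) <|
    Or.inr ⟨i, k, hL, hR, rfl⟩

theorem dotted_reidemeister_odd_odd_even (n : ℕ) (i j : Fin (n - 1))
    (hij : (j : ℕ) = (i : ℕ) + 1) :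
    (γd (strandL i) * σd i * γd (strandR i)) *
      (γd (strandL j) * σd j * γd (strandR j)) * σd i =
    σd j * ((γd (strandL i) * σd i * γd (strandR i)) *
      (γd (strandL j) * σd j * γd (strandR j)) : DottedBraidGroup n) := by
  have hmid : strandR i = strandL j := by simp [strandL, strandR, hij]
  have hc : (γd (strandR j) * σd i : DottedBraidGroup n) = σd i * γd (strandR j) :=
    γd_mul_σd_comm _ _ (by simp [strandL, strandR, Fin.ext_iff]; omega)
      (by simp [strandR, Fin.ext_iff]; omega)
  have ha : (γd (strandL i) * σd j : DottedBraidGroup n) = σd j * γd (strandL i) :=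
    γd_mul_σd_comm _ _ (by simp [strandL, Fin.ext_iff]; omega)
      (by simp [strandL, strandR, Fin.ext_iff]; omega)
  have hcancel : (γd (strandL i) * σd i * γd (strandR i)) *
      (γd (strandL j) * σd j * γd (strandR j)) =
      (γd (strandL i) * σd i * σd j * γd (strandR j) : DottedBraidGroup n) := by
    rw [hmid]
    calc _ = γd (strandL i) * σd i * (γd (strandL j) * γd (strandL j)) * σd j *
          γd (strandR j) := by group
      _ = _ := by rw [γd_mul_self, mul_one]
  rw [hcancel]
  calc γd (strandL i) * σd i * σd j * γd (strandR j) * σd i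
      = γd (strandL i) * (σd i * σd j * σd i) * γd (strandR j) := by
        simp only [mul_assoc, hc]
    _ = (γd (strandL i) * σd j) * σd i * σd j * γd (strandR j) := by
        simp only [σd_braid i j hij, mul_assoc]
    _ = σd j * (γd (strandL i) * σd i * σd j * γd (strandR j)) := by
        simp only [ha, mul_assoc]

end MarkedBraids
end
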